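/- Let f be a +proper closed relation on a locally compact, σ-compact Hausdorff space X, let X̂ be a compact Hausdorff space containing X as a dense open subspace, let f̂ be the closure of f in X̂ × X̂, and assume (1_{X̂} ∪ 𝒢f̂) ∩ (X × X) = 1_X ∪ 𝒢f (almost dynamic). Then the compactification is dynamic: 𝒢f̂ ∩ (X × X) = 𝒢f. Moreover, if ẑ ∈ X̂ satisfies (ẑ,ẑ) ∈ 𝒢f̂ and Ê = {w ∈ X̂ | (ẑ,w) ∈ 𝒢f̂ and (w,ẑ) ∈ 𝒢f̂} with E = Ê ∩ X, then exactly one of the following holds: (i) Ê ⊆ X̂ ∖ X and E = ∅; (ii) E is a non-compact set, there is x ∈ E with (x,x) ∈ 𝒢f and E = {w ∈ X | (x,w) ∈ 𝒢f and (w,x) ∈ 𝒢f}, and the closure of E in X̂ meets X̂ ∖ X and is contained in Ê; (iii) Ê = E is compact, and there is x ∈ E with (x,x) ∈ 𝒢f and E = {w ∈ X | (x,w) ∈ 𝒢f and (w,x) ∈ 𝒢f}. -/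

import Mathlib

/-- The image of a set `A` under a relation `f ⊆ X × Y`. -/
def relImage {X Y : Type*} (f : Set (X × Y)) (A : Set X) : Set Y :=
  {y | ∃ x ∈ A, (x, y) ∈ f}

/-- The reverse (inverse) relation of `f ⊆ X × Y`. -/
def relInv {X Y : Type*} (f : Set (X × Y)) : Set (Y × X) :=
  {p | (p.2, p.1) ∈ f}

/-- Composition of relations: `relComp g f = g ∘ f` (first `f`, then `g`). -/
def relComp {X Y Z : Type*} (g : Set (Y × Z)) (f : Set (X × Y)) : Set (X × Z) :=
  {p | ∃ y, (p.1, y) ∈ f ∧ (y, p.2) ∈ g}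

/-- A relation on `X` is transitive. -/
def RelTrans {X : Type*} (f : Set (X × X)) : Prop :=
  ∀ x y z : X, (x, y) ∈ f → (y, z) ∈ f → (x, z) ∈ f

/-- `gRel f` is the smallest closed transitive relation containing `f`:
the intersection of all closed transitive relations containing `f`. -/
def gRel {X : Type*} [TopologicalSpace X] (f : Set (X × X)) : Set (X × X) :=
  ⋂₀ {g : Set (X × X) | f ⊆ g ∧ IsClosed g ∧ RelTrans g}

/-!
Near a point of the open set `X` the relation `f̂` is the closed graph of `f` over a compact
neighbourhood, so `f̂` never leads out of `X`. A diagonal pair of `𝒢f̂` over `X` therefore starts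
with a step of `f`, after which almost dynamicity applies off the diagonal.

For the trichotomy, the crux is that a compact nonempty trace `E` exhausts `Ê`. A class of `𝒢f̂`
cannot be covered by two nonempty closed pieces with no `f̂`-step from the first to the second, and
`f̂` has no step from `E` to `Ê \ X`.
-/

section Relations

variable {X Y Z : Type*}

/-- The set of points related to `z` in both directions by `R`: the `R ∩ R⁻¹`-equivalence class of
`z` when `R` is transitive and `(z, z) ∈ R`. -/
def mutualClass (R : Set (X × X)) (z : X) : Set X :=
  {w | (z, w) ∈ R ∧ (w, z) ∈ R}

theorem RelTrans.mutualClass_eq {R : Set (X × X)} (hR : RelTrans R) {z w : X}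
    (hw : w ∈ mutualClass R z) : mutualClass R w = mutualClass R z := by
  ext v
  exact ⟨fun hv => ⟨hR _ _ _ hw.1 hv.1, hR _ _ _ hv.2 hw.2⟩,
    fun hv => ⟨hR _ _ _ hw.2 hv.1, hR _ _ _ hv.2 hw.1⟩⟩

variable [TopologicalSpace X] [TopologicalSpace Y] [TopologicalSpace Z]

theorem isClosed_mutualClass {R : Set (X × X)} (hR : IsClosed R) (z : X) :
    IsClosed (mutualClass R z) :=
  (hR.preimage (Continuous.prodMk_right z)).inter (hR.preimage (Continuous.prodMk_left z))

theorem isClosed_relComp [CompactSpace Y] {g : Set (Y × Z)} {f : Set (X × Y)}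
    (hg : IsClosed g) (hf : IsClosed f) : IsClosed (relComp g f) := by
  have hfiber : IsClosed {q : (X × Z) × Y | (q.1.1, q.2) ∈ f ∧ (q.2, q.1.2) ∈ g} :=
    (hf.preimage (f := fun q : (X × Z) × Y => (q.1.1, q.2)) (by fun_prop)).inter
      (hg.preimage (f := fun q : (X × Z) × Y => (q.2, q.1.2)) (by fun_prop))
  convert isClosedMap_fst_of_compactSpace _ hfiber using 1
  ext p
  simp [relComp]

end Relations

section ClosedTransitiveHull

variable {X Y : Type*} [TopologicalSpace X] [TopologicalSpace Y]

theorem subset_gRel (f : Set (X × X)) : f ⊆ gRel f :=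
  fun _ hp _ hg => hg.1 hp

theorem isClosed_gRel (f : Set (X × X)) : IsClosed (gRel f) :=
  isClosed_sInter fun _ hg => hg.2.1

theorem relTrans_gRel (f : Set (X × X)) : RelTrans (gRel f) :=
  fun x y z hxy hyz g hg => hg.2.2 x y z (hxy g hg) (hyz g hg)

theorem gRel_subset {f g : Set (X × X)} (hfg : f ⊆ g) (hg : IsClosed g) (hgt : RelTrans g) :
    gRel f ⊆ g :=
  Set.sInter_subset_of_mem ⟨hfg, hg, hgt⟩

theorem gRel_subset_preimage_gRel {j : X → Y} (hj : Continuous j) {f : Set (X × X)}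
    {g : Set (Y × Y)} (hfg : f ⊆ Prod.map j j ⁻¹' g) : gRel f ⊆ Prod.map j j ⁻¹' gRel g :=
  gRel_subset (hfg.trans (Set.preimage_mono (subset_gRel g)))
    ((isClosed_gRel g).preimage (hj.prodMap hj))
    fun _ _ _ hxy hyz => relTrans_gRel g _ _ _ hxy hyz

variable [CompactSpace X] {f : Set (X × X)}

theorem gRel_eq_union_relComp (hf : IsClosed f) : gRel f = f ∪ relComp (gRel f) f := by
  have hsub : f ∪ relComp (gRel f) f ⊆ gRel f := by
    rintro ⟨x, y⟩ (hxy | ⟨c, hxc, hcy⟩)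
    · exact subset_gRel f hxy
    · exact relTrans_gRel f _ _ _ (subset_gRel f hxc) hcy
  refine (gRel_subset Set.subset_union_left
    (hf.union (isClosed_relComp (isClosed_gRel f) hf)) ?_).antisymm hsub
  rintro x y z (hxy | ⟨c, hxc, hcy⟩) hyz
  · exact Or.inr ⟨y, hxy, hsub hyz⟩
  · exact Or.inr ⟨c, hxc, relTrans_gRel f _ _ _ hcy (hsub hyz)⟩

theorem exists_between_notMem_union_of_disjoint_prod {V W : Set X} (hV : IsOpen V)
    (hW : IsOpen W) (hVW : Disjoint (V ×ˢ W) f) {a b : X} (hab : (a, b) ∈ gRel f)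
    (ha : a ∈ V) (hb : b ∈ W) :
    ∃ r ∉ V ∪ W, (a, r) ∈ gRel f ∧ (r, b) ∈ gRel f := by
  let viaOutside := relComp (gRel f ∩ Prod.fst ⁻¹' (V ∪ W)ᶜ) (gRel f)
  have hclosed : IsClosed (gRel f ∩ ((V ×ˢ W)ᶜ ∪ viaOutside)) :=
    (isClosed_gRel f).inter <| (hV.prod hW).isClosed_compl.union <|
      isClosed_relComp ((isClosed_gRel f).inter
        ((hV.union hW).isClosed_compl.preimage continuous_fst)) (isClosed_gRel f)
  have htrans : RelTrans (gRel f ∩ ((V ×ˢ W)ᶜ ∪ viaOutside)) := by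
    rintro x y z ⟨hxy, hxy'⟩ ⟨hyz, hyz'⟩
    refine ⟨relTrans_gRel f _ _ _ hxy hyz, or_iff_not_imp_left.2 fun hxz => ?_⟩
    obtain ⟨hx, hz⟩ : x ∈ V ∧ z ∈ W := not_not.1 hxz
    by_cases hyV : y ∈ V
    · obtain ⟨r, hyr, hrz⟩ := hyz'.resolve_left (not_not.2 ⟨hyV, hz⟩)
      exact ⟨r, relTrans_gRel f _ _ _ hxy hyr, hrz⟩
    by_cases hyW : y ∈ W
    · obtain ⟨r, hxr, hry, hr⟩ := hxy'.resolve_left (not_not.2 ⟨hx, hyW⟩)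
      exact ⟨r, hxr, relTrans_gRel f _ _ _ hry hyz, hr⟩
    · exact ⟨y, hxy, hyz, fun hy => hy.elim hyV hyW⟩
  have hf : f ⊆ gRel f ∩ ((V ×ˢ W)ᶜ ∪ viaOutside) :=
    fun p hp => ⟨subset_gRel f hp, Or.inl fun hpVW => Set.disjoint_left.1 hVW hpVW hp⟩
  obtain ⟨r, har, hrb, hr⟩ :=
    (gRel_subset hf hclosed htrans hab).2.resolve_left (not_not.2 ⟨ha, hb⟩)
  exact ⟨r, hr, har, hrb⟩

theorem eq_empty_or_eq_empty_of_union_eq_mutualClass_gRel (hf : IsClosed f) {z : X}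
    {A B : Set X} (hA : IsClosed A) (hB : IsClosed B)
    (hAB : A ∪ B = mutualClass (gRel f) z) (hdisj : Disjoint (A ×ˢ B) f) :
    A = ∅ ∨ B = ∅ := by
  by_contra! hne
  obtain ⟨⟨a, ha⟩, ⟨b, hb⟩⟩ := hne
  obtain ⟨V, W, hV, hW, hAV, hBW, hVW⟩ := generalized_tube_lemma hA.isCompact hB.isCompact
    hf.isOpen_compl (Set.subset_compl_iff_disjoint_right.2 hdisj)
  have haz : a ∈ mutualClass (gRel f) z := hAB ▸ Or.inl ha
  have hbz : b ∈ mutualClass (gRel f) z := hAB ▸ Or.inr hb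
  obtain ⟨r, hr, har, hrb⟩ := exists_between_notMem_union_of_disjoint_prod hV hW
    (Set.subset_compl_iff_disjoint_right.1 hVW) (relTrans_gRel f _ _ _ haz.2 hbz.1)
    (hAV ha) (hBW hb)
  have hrz : r ∈ mutualClass (gRel f) z :=
    ⟨relTrans_gRel f _ _ _ haz.1 har, relTrans_gRel f _ _ _ hrb hbz.2⟩
  exact hr (Set.union_subset_union hAV hBW (hAB ▸ hrz))

end ClosedTransitiveHull

section Compactification

variable {X Xh : Type*} [TopologicalSpace Xh] {j : X → Xh} {f : Set (X × X)}

/-- The relation `f̂` on `X̂`: the closure of `f`, where `X` is regarded as a subspace of `X̂`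
via `j`. -/
def relExtension (j : X → Xh) (f : Set (X × X)) : Set (Xh × Xh) :=
  closure (Prod.map j j '' f)

theorem subset_preimage_relExtension (j : X → Xh) (f : Set (X × X)) :
    f ⊆ Prod.map j j ⁻¹' relExtension j f :=
  Set.image_subset_iff.1 subset_closure

variable [TopologicalSpace X]

/-- A +proper relation: a closed relation mapping compact sets to compact sets. -/
structure IsPlusProper (f : Set (X × X)) : Prop where
  isClosed : IsClosed f
  isCompact_relImage : ∀ A : Set X, IsCompact A → IsCompact (relImage f A)

/-- The map `j : X → X̂` is dynamic for `f`: `𝒢f̂ ∩ (X × X) = 𝒢f`, the intersection with `X × X`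
being encoded as a preimage. -/
def IsDynamic (j : X → Xh) (f : Set (X × X)) : Prop :=
  Prod.map j j ⁻¹' gRel (relExtension j f) = gRel f

/-- The map `j : X → X̂` is almost dynamic for `f`: `(1 ∪ 𝒢f̂) ∩ (X × X) = 1 ∪ 𝒢f`, the
intersection with `X × X` being encoded as a preimage. -/
def IsAlmostDynamic (j : X → Xh) (f : Set (X × X)) : Prop :=
  Prod.map j j ⁻¹' (Set.diagonal Xh ∪ gRel (relExtension j f)) = Set.diagonal X ∪ gRel f

theorem IsPlusProper.isCompact_inter_fst_preimage (hf : IsPlusProper f) {A : Set X}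
    (hA : IsCompact A) : IsCompact (f ∩ Prod.fst ⁻¹' A) := by
  have hgraph : f ∩ Prod.fst ⁻¹' A = A ×ˢ relImage f A ∩ f := by
    ext p
    exact ⟨fun ⟨hp, hpA⟩ => ⟨⟨hpA, p.1, hpA, hp⟩, hp⟩, fun ⟨hpA, hp⟩ => ⟨hp, hpA.1⟩⟩
  rw [hgraph]
  exact (hA.prod (hf.isCompact_relImage A hA)).inter_right hf.isClosed

theorem IsPlusProper.exists_of_mem_relExtension [WeaklyLocallyCompactSpace X] [T2Space Xh]
    (hf : IsPlusProper f) (hj : Topology.IsOpenEmbedding j) {x : X} {b : Xh}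
    (hb : (j x, b) ∈ relExtension j f) : ∃ y, (x, y) ∈ f ∧ j y = b := by
  obtain ⟨A, hA, hxA⟩ := exists_compact_mem_nhds x
  let U : Set (Xh × Xh) := Prod.fst ⁻¹' (j '' interior A)
  let K : Set (Xh × Xh) := Prod.map j j '' (f ∩ Prod.fst ⁻¹' A)
  have hU : IsOpen U := (hj.isOpenMap _ isOpen_interior).preimage continuous_fst
  have hK : IsClosed K := ((hf.isCompact_inter_fst_preimage hA).image
    (hj.continuous.prodMap hj.continuous)).isClosed
  have hUK : U ∩ Prod.map j j '' f ⊆ K := by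
    rintro _ ⟨hpU, p, hp, rfl⟩
    have hpA : p.1 ∈ A := interior_subset (hj.injective.mem_set_image.1 hpU)
    exact ⟨p, ⟨hp, hpA⟩, rfl⟩
  have hxU : (j x, b) ∈ U := ⟨x, mem_interior_iff_mem_nhds.2 hxA, rfl⟩
  obtain ⟨⟨u, y⟩, ⟨huy, -⟩, heq⟩ := closure_minimal hUK hK (hU.inter_closure ⟨hxU, hb⟩)
  obtain ⟨hux, hyb⟩ := Prod.mk.inj heq
  exact ⟨y, hj.injective hux ▸ huy, hyb⟩

theorem IsAlmostDynamic.isDynamic [WeaklyLocallyCompactSpace X] [CompactSpace Xh] [T2Space Xh]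
    (had : IsAlmostDynamic j f) (hj : Topology.IsOpenEmbedding j) (hf : IsPlusProper f) :
    IsDynamic j f := by
  have hoff : ∀ {x y : X}, x ≠ y → (j x, j y) ∈ gRel (relExtension j f) → (x, y) ∈ gRel f :=
    fun {x y} hne hxy => ((Set.ext_iff.1 had (x, y)).1 (Or.inr hxy)).resolve_left hne
  refine Set.Subset.antisymm ?_
    (gRel_subset_preimage_gRel hj.continuous (subset_preimage_relExtension j f))
  rintro ⟨x, y⟩ (hxy : (j x, j y) ∈ gRel (relExtension j f))
  obtain rfl | hne := eq_or_ne x y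
  · rw [gRel_eq_union_relComp (f := relExtension j f) isClosed_closure] at hxy
    obtain hxx | ⟨_, hxc, hcx⟩ := hxy
    · obtain ⟨y, hxy, hyx⟩ := hf.exists_of_mem_relExtension hj hxx
      exact subset_gRel f (hj.injective hyx ▸ hxy)
    · obtain ⟨y, hxy, rfl⟩ := hf.exists_of_mem_relExtension hj hxc
      obtain rfl | hyx := eq_or_ne y x
      · exact subset_gRel f hxy
      · exact relTrans_gRel f _ _ _ (subset_gRel f hxy) (hoff hyx hcx)
  · exact hoff hne hxy

theorem IsDynamic.preimage_mutualClass (hdyn : IsDynamic j f) (x : X) :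
    j ⁻¹' mutualClass (gRel (relExtension j f)) (j x) = mutualClass (gRel f) x := by
  rw [← hdyn]
  rfl

theorem IsDynamic.exists_preimage_mutualClass_eq (hdyn : IsDynamic j f) {z : Xh}
    (hne : (j ⁻¹' mutualClass (gRel (relExtension j f)) z).Nonempty) :
    ∃ x ∈ j ⁻¹' mutualClass (gRel (relExtension j f)) z, (x, x) ∈ gRel f ∧
      j ⁻¹' mutualClass (gRel (relExtension j f)) z = mutualClass (gRel f) x := by
  obtain ⟨x, hx⟩ := hne
  have hclass : j ⁻¹' mutualClass (gRel (relExtension j f)) z = mutualClass (gRel f) x := by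
    rw [← hdyn.preimage_mutualClass, (relTrans_gRel _).mutualClass_eq hx]
  exact ⟨x, hx, (hclass ▸ hx : x ∈ mutualClass (gRel f) x).1, hclass⟩

theorem IsPlusProper.mutualClass_eq_image_of_isCompact [WeaklyLocallyCompactSpace X]
    [CompactSpace Xh] [T2Space Xh] (hf : IsPlusProper f) (hj : Topology.IsOpenEmbedding j) {z : Xh}
    (hne : (j ⁻¹' mutualClass (gRel (relExtension j f)) z).Nonempty)
    (hcomp : IsCompact (j ⁻¹' mutualClass (gRel (relExtension j f)) z)) :
    mutualClass (gRel (relExtension j f)) z =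
      j '' (j ⁻¹' mutualClass (gRel (relExtension j f)) z) := by
  set Eh := mutualClass (gRel (relExtension j f)) z
  have hunion : j '' (j ⁻¹' Eh) ∪ Eh \ Set.range j = Eh := by
    rw [Set.image_preimage_eq_inter_range, Set.inter_union_sdiff]
  have hclosed : IsClosed (Eh \ Set.range j) :=
    (isClosed_mutualClass (isClosed_gRel _) z).sdiff hj.isOpen_range
  have hdisj : Disjoint ((j '' (j ⁻¹' Eh)) ×ˢ (Eh \ Set.range j)) (relExtension j f) := by
    rw [Set.disjoint_left]
    rintro ⟨_, b⟩ ⟨⟨x, -, rfl⟩, -, hb⟩ hxb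
    obtain ⟨y, -, hy⟩ := hf.exists_of_mem_relExtension hj hxb
    exact hb ⟨y, hy⟩
  have hout : Eh \ Set.range j = ∅ :=
    (eq_empty_or_eq_empty_of_union_eq_mutualClass_gRel isClosed_closure
      (hcomp.image hj.continuous).isClosed hclosed hunion hdisj).resolve_left
      (hne.image j).ne_empty
  rw [hout, Set.union_empty] at hunion
  exact hunion.symm

theorem isCompact_of_closure_image_subset_range [CompactSpace Xh] (hj : Topology.IsInducing j)
    {E : Set X} (hE : IsClosed E) (hrange : closure (j '' E) ⊆ Set.range j) : IsCompact E := by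
  rw [← hE.closure_eq, hj.closure_eq_preimage_closure_image]
  exact (hj.isCompact_preimage_iff hrange).2 isClosed_closure.isCompact

theorem almostDynamic_isDynamic_and_trichotomy_general [CompactSpace Xh] [T2Space Xh]
    (hj : Topology.IsOpenEmbedding j) (hf : IsPlusProper f) (had : IsAlmostDynamic j f) :
    IsDynamic j f ∧
    ∀ (z : Xh) (Eh : Set Xh) (E : Set X),
      Eh = mutualClass (gRel (relExtension j f)) z → E = j ⁻¹' Eh →
      (Eh ⊆ (Set.range j)ᶜ ∧ E = ∅) ∨
      (¬ IsCompact E ∧ (∃ x ∈ E, (x, x) ∈ gRel f ∧ E = mutualClass (gRel f) x) ∧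
        (closure (j '' E) ∩ (Set.range j)ᶜ).Nonempty ∧ closure (j '' E) ⊆ Eh) ∨
      (Eh = j '' E ∧ IsCompact E ∧ ∃ x ∈ E, (x, x) ∈ gRel f ∧ E = mutualClass (gRel f) x) := by
  have : LocallyCompactSpace X := hj.locallyCompactSpace
  have hdyn : IsDynamic j f := had.isDynamic hj hf
  refine ⟨hdyn, ?_⟩
  rintro z Eh E rfl rfl
  have hclosed := isClosed_mutualClass (isClosed_gRel (relExtension j f)) z
  obtain hempty | hne := Set.eq_empty_or_nonempty (j ⁻¹' mutualClass (gRel (relExtension j f)) z)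
  · exact Or.inl
      ⟨Set.subset_compl_iff_disjoint_right.2 (Set.preimage_eq_empty_iff.1 hempty), hempty⟩
  have hclass := hdyn.exists_preimage_mutualClass_eq hne
  by_cases hcomp : IsCompact (j ⁻¹' mutualClass (gRel (relExtension j f)) z)
  · exact Or.inr (Or.inr ⟨hf.mutualClass_eq_image_of_isCompact hj hne hcomp, hcomp, hclass⟩)
  · have hescape := mt (isCompact_of_closure_image_subset_range hj.isInducing
      (hclosed.preimage hj.continuous)) hcomp
    exact Or.inr (Or.inl ⟨hcomp, hclass, Set.inter_compl_nonempty_iff.2 hescape,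
      closure_minimal (Set.image_preimage_subset j _) hclosed⟩)

end Compactification

/-- An almost dynamic proper compactification of a +proper closed relation
is dynamic, and the trichotomy for `𝒢f̂ ∩ 𝒢f̂⁻¹`-equivalence classes of generalized
recurrent points holds. -/
theorem almostDynamic_isDynamic_and_trichotomy
    {X : Type*} [TopologicalSpace X] [LocallyCompactSpace X]
    [SigmaCompactSpace X] [T2Space X]
    {Xh : Type*} [TopologicalSpace Xh] [CompactSpace Xh] [T2Space Xh]
    (j : X → Xh) (hj : Topology.IsEmbedding j)
    (hopen : IsOpen (Set.range j)) (hdense : Dense (Set.range j))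
    (f : Set (X × X)) (hf : IsClosed f)
    (hplus : ∀ A : Set X, IsCompact A → IsCompact (relImage f A))
    (fh : Set (Xh × Xh)) (hfh : fh = closure (Prod.map j j '' f))
    (had : ∀ x y : X,
      ((j x, j y) ∈ Set.diagonal Xh ∪ gRel fh) ↔ ((x, y) ∈ Set.diagonal X ∪ gRel f)) :
    (∀ x y : X, (j x, j y) ∈ gRel fh ↔ (x, y) ∈ gRel f) ∧
    (∀ zh : Xh, (zh, zh) ∈ gRel fh →
      ∀ (Eh : Set Xh) (E : Set X),
        Eh = {w : Xh | (zh, w) ∈ gRel fh ∧ (w, zh) ∈ gRel fh} →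
        E = {w : X | j w ∈ Eh} →
        -- (i) Ê is contained in X̂ ∖ X and E = ∅
        ((Eh ⊆ (Set.range j)ᶜ ∧ E = ∅) ∨
        -- (ii) E is a noncompact 𝒢f ∩ 𝒢f⁻¹ equivalence class of a generalized
        -- recurrent point, whose closure in X̂ meets X̂ ∖ X and is contained in Ê
         (¬ IsCompact E ∧
            (∃ x ∈ E, (x, x) ∈ gRel f ∧
              E = {w : X | (x, w) ∈ gRel f ∧ (w, x) ∈ gRel f}) ∧
            (closure (j '' E) ∩ (Set.range j)ᶜ).Nonempty ∧
            closure (j '' E) ⊆ Eh) ∨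
        -- (iii) Ê = E is a compact 𝒢f ∩ 𝒢f⁻¹ equivalence class
         (Eh = j '' E ∧ IsCompact E ∧
            ∃ x ∈ E, (x, x) ∈ gRel f ∧
              E = {w : X | (x, w) ∈ gRel f ∧ (w, x) ∈ gRel f}))) := by
  subst hfh
  obtain ⟨hdyn, htri⟩ := almostDynamic_isDynamic_and_trichotomy_general ⟨hj, hopen⟩ ⟨hf, hplus⟩
    (Set.ext fun p => had p.1 p.2)
  exact ⟨fun x y => Set.ext_iff.1 hdyn (x, y), fun z _ => htri z⟩
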